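/- arXiv:1604.07695 — 2 statements merged into one kernel-verified Lean document; each statement's English description precedes it below -/
import Mathlib

section
/- Let 𝔤 be a real Lie algebra and let 𝔨 and 𝔭 be linear subspaces with 𝔤 = 𝔨 ⊕ 𝔭 as a vector space, [𝔨, 𝔨] ⊆ 𝔨, [𝔨, 𝔭] ⊆ 𝔭, and [𝔭, 𝔭] ⊆ 𝔨. Let v ∈ 𝔨 be such that [v, x] ≠ 0 for every nonzero x ∈ 𝔭. Then every abelian Lie subalgebra 𝔱′ of 𝔤 with dim 𝔱′ ≥ 2 that is contained in the subspace ℝv + 𝔭 is in fact contained in 𝔭. -/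
/-- For a symmetric pair decomposition `𝔤 = 𝔨 ⊕ 𝔭` and `v ∈ 𝔨` with `ad(v)`
injective on `𝔭`, every abelian subalgebra of dimension at least `2` contained
in `ℝv + 𝔭` is contained in `𝔭`. -/
theorem stmt_6 {𝔤 : Type*} [LieRing 𝔤] [LieAlgebra ℝ 𝔤]
    (𝔨 𝔭 : Submodule ℝ 𝔤)
    (hsum : 𝔨 ⊔ 𝔭 = ⊤) (hint : 𝔨 ⊓ 𝔭 = ⊥)
    (hkk : ∀ x ∈ 𝔨, ∀ y ∈ 𝔨, ⁅x, y⁆ ∈ 𝔨)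
    (hkp : ∀ x ∈ 𝔨, ∀ y ∈ 𝔭, ⁅x, y⁆ ∈ 𝔭)
    (hpp : ∀ x ∈ 𝔭, ∀ y ∈ 𝔭, ⁅x, y⁆ ∈ 𝔨)
    (v : 𝔤) (hv : v ∈ 𝔨) (hreg : ∀ x ∈ 𝔭, x ≠ 0 → ⁅v, x⁆ ≠ 0)
    (𝔱' : LieSubalgebra ℝ 𝔤) (habelian : ∀ x ∈ 𝔱', ∀ y ∈ 𝔱', ⁅x, y⁆ = 0)
    (hdim : 2 ≤ Module.rank ℝ 𝔱')
    (hsub : (𝔱' : Set 𝔤) ⊆ (Submodule.span ℝ {v} ⊔ 𝔭 : Submodule ℝ 𝔤)) :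
    (𝔱' : Set 𝔤) ⊆ 𝔭 := by
  intro x hx
  by_contra hxp
  obtain ⟨x1, hx1, p, hp, hxe⟩ := Submodule.mem_sup.1 (hsub hx)
  obtain ⟨a, rfl⟩ := Submodule.mem_span_singleton.1 hx1
  have ha : a ≠ 0 := by
    rintro rfl
    apply hxp
    rw [← hxe]
    simpa using hp
  have key : ∀ y ∈ 𝔱', ∃ r : ℝ, r • x = y := by
    intro y hy
    obtain ⟨y1, hy1, q, hq, hye⟩ := Submodule.mem_sup.1 (hsub hy)
    obtain ⟨b, rfl⟩ := Submodule.mem_span_singleton.1 hy1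
    have hw : a • q - b • p ∈ 𝔭 := 𝔭.sub_mem (𝔭.smul_mem a hq) (𝔭.smul_mem b hp)
    have h0 := habelian x hx y hy
    have hexp : ⁅x, y⁆ = ⁅v, a • q - b • p⁆ + ⁅p, q⁆ := by
      rw [← hxe, ← hye]
      simp only [add_lie, lie_add, lie_sub, smul_lie, lie_smul, lie_self, smul_zero]
      rw [← lie_skew v p, smul_neg]
      module
    rw [hexp] at h0
    have hk : ⁅v, a • q - b • p⁆ ∈ 𝔨 := by
      rw [eq_neg_of_add_eq_zero_left h0]
      exact 𝔨.neg_mem (hpp p hp q hq)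
    have hz : ⁅v, a • q - b • p⁆ = 0 := by
      have : ⁅v, a • q - b • p⁆ ∈ 𝔨 ⊓ 𝔭 := ⟨hk, hkp v hv _ hw⟩
      rw [hint] at this
      simpa using this
    have hq0 : a • q - b • p = 0 := by
      by_contra hne
      exact hreg _ hw hne hz
    refine ⟨a⁻¹ * b, ?_⟩
    have hqe : q = a⁻¹ • b • p := by
      rw [← sub_eq_zero.1 hq0, smul_smul, inv_mul_cancel₀ ha, one_smul]
    rw [← hye, ← hxe, hqe, smul_add, smul_smul, smul_smul]
    congr 2
    field_simp
  have hle : Module.rank ℝ 𝔱' ≤ 1 := by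
    rw [rank_le_one_iff]
    refine ⟨⟨x, hx⟩, fun y => ?_⟩
    obtain ⟨r, hr⟩ := key y y.2
    exact ⟨r, Subtype.ext hr⟩
  have h21 := hdim.trans hle
  norm_num at h21
end

section
/- Let V be a finite-dimensional real vector space (with its canonical topology) and let F : V → ℝ be a continuous function such that F(y) > 0 for every y ≠ 0, F(λy) = λF(y) for all λ ≥ 0 and y ∈ V, and F(x + y) ≤ F(x) + F(y) for all x, y ∈ V. Let v ∈ V satisfy F(v) < 1 and F(−v) < 1. Then the map φ : V → V defined by φ(y) = y + F(y)·v is a bijection; equivalently, for every ỹ ∈ V there exists a unique y ∈ V with y + F(y)·v = ỹ, and for ỹ ≠ 0 there is a unique r ≥ 0 with F(ỹ − r·v) = r. -/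
/-- The navigation process `y ↦ y + F(y)·v` for a Minkowski-type norm `F` and
a vector `v` with `F(v) < 1` and `F(−v) < 1` is a bijection. -/
theorem stmt_9 {V : Type*} [NormedAddCommGroup V] [NormedSpace ℝ V]
    [FiniteDimensional ℝ V]
    (F : V → ℝ) (hFcont : Continuous F)
    (hFpos : ∀ y : V, y ≠ 0 → 0 < F y)
    (hFhom : ∀ (l : ℝ) (y : V), 0 ≤ l → F (l • y) = l * F y)
    (hFsub : ∀ x y : V, F (x + y) ≤ F x + F y)
    (v : V) (hv : F v < 1) (hv' : F (-v) < 1) :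
    Function.Bijective (fun y : V => y + F y • v) ∧
    (∀ z : V, ∃! y : V, y + F y • v = z) ∧
    (∀ z : V, z ≠ 0 → ∃! r : ℝ, 0 ≤ r ∧ F (z - r • v) = r) := by
  have hF0 : F 0 = 0 := by simpa using hFhom 0 0 le_rfl
  have hnn : ∀ y, 0 ≤ F y := by
    intro y
    by_cases h : y = 0
    · rw [h, hF0]
    · exact (hFpos y h).le
  have key : ∀ (z : V) (s r : ℝ), s ≤ r →
      F (z - r • v) ≤ F (z - s • v) + (r - s) * F (-v) := by
    intro z s r h
    have h1 := hFsub (z - s • v) ((r - s) • (-v))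
    rw [hFhom _ _ (sub_nonneg.2 h)] at h1
    have h2 : z - s • v + (r - s) • (-v) = z - r • v := by module
    rwa [h2] at h1
  have huniq : ∀ (z : V) (s r : ℝ), s ≤ r → F (z - s • v) = s → F (z - r • v) = r → s = r := by
    intro z s r h hs hr
    have := key z s r h
    rw [hs, hr] at this
    nlinarith
  have hr : ∀ z : V, ∃! r : ℝ, 0 ≤ r ∧ F (z - r • v) = r := by
    intro z
    have hd : 0 < 1 - F (-v) := by linarith
    set R := F z / (1 - F (-v)) with hR
    have hR0 : 0 ≤ R := div_nonneg (hnn z) hd.le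
    have hRm : R * (1 - F (-v)) = F z := div_mul_cancel₀ _ hd.ne'
    have hc : ContinuousOn (fun r : ℝ => F (z - r • v) - r) (Set.Icc 0 R) := by
      apply Continuous.continuousOn
      fun_prop
    have hm : (0 : ℝ) ∈ Set.Icc (F (z - R • v) - R) (F (z - (0 : ℝ) • v) - 0) := by
      constructor
      · have := key z 0 R hR0
        simp only [zero_smul, sub_zero] at this
        linarith
      · simpa using hnn z
    obtain ⟨r, hr1, hr2⟩ := intermediate_value_Icc' hR0 hc hm
    have hr3 : F (z - r • v) = r := by
      simp only at hr2
      linarith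
    refine ⟨r, ⟨hr1.1, hr3⟩, ?_⟩
    rintro s ⟨_, hs⟩
    rcases le_total s r with h | h
    · exact huniq z s r h hs hr3
    · exact (huniq z r s h hr3 hs).symm
  have hy : ∀ z : V, ∃! y : V, y + F y • v = z := by
    intro z
    obtain ⟨r, ⟨_, hr2⟩, hr3⟩ := hr z
    refine ⟨z - r • v, ?_, ?_⟩
    · simp only [hr2, sub_add_cancel]
    · intro y hyz
      have h1 : z - F y • v = y := by rw [← hyz]; abel
      have h2 := hr3 (F y) ⟨hnn y, by rw [h1]⟩
      rw [← h2, h1]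
  exact ⟨(Function.bijective_iff_existsUnique _).2 hy, hy, fun z _ => hr z⟩
end
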